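/- Let n ≥ 1 and let L be a commutative integral residuated lattice that is n-potent: x^n = x^{n+1} for all x ∈ L. Then K(L) is (n+1)-potent: X^{n+1} = X^{n+2} for every X ∈ K(L). -/

import Mathlib

/-- A commutative integral residuated lattice. -/
class CIRL (L : Type*) extends Lattice L, CommMonoid L where
  imp : L → L → L
  resid : ∀ a b c : L, a * b ≤ c ↔ a ≤ imp b c
  le_one : ∀ a : L, a ≤ (1 : L)

namespace CIRL

variable {L : Type*} [CIRL L]

/-- Join in `K(L)`. -/
def kjoin (X Y : L × L) : L × L := (X.1 ⊔ Y.1, X.2 ⊓ Y.2)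

/-- Meet in `K(L)`. -/
def kmeet (X Y : L × L) : L × L := (X.1 ⊓ Y.1, X.2 ⊔ Y.2)

/-- Product in `K(L)`. -/
def kmul (X Y : L × L) : L × L := (X.1 * Y.1, imp X.1 Y.2 ⊓ imp Y.1 X.2)

/-- Implication in `K(L)`. -/
def kimp (X Y : L × L) : L × L := (imp X.1 Y.1 ⊓ imp Y.2 X.2, X.1 * Y.2)

/-- The unit of `K(L)`. -/
def kone : L × L := ((1 : L), (1 : L))

end CIRL

open CIRL

namespace CIRL

/-- Powers in `K(L)` with respect to the K-expansion product. -/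
def kpow {L : Type*} [CIRL L] (X : L × L) : ℕ → L × L
  | 0 => kone
  | n + 1 => kmul X (kpow X n)

end CIRL

namespace CIRL

variable {L : Type*} [CIRL L]

theorem imp_one (a : L) : imp a 1 = 1 :=
  le_antisymm (le_one _) ((resid _ _ _).mp (le_one _))

theorem imp_imp (a b c : L) : imp a (imp b c) = imp (a * b) c :=
  eq_of_forall_le_iff fun d => by simp only [← resid, mul_assoc]

-- The exponent in the second coordinate lags behind by one, whence the shift from `n` to `n + 1`.
theorem kpow_succ_eq (X : L × L) (k : ℕ) :
    kpow X (k + 1) = (X.1 ^ (k + 1), imp (X.1 ^ k) X.2) := by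
  induction k with
  | zero =>
    calc kpow X 1
        = (X.1, 1 ⊓ imp 1 X.2) := by simp only [kpow, kmul, kone, imp_one, mul_one]
      _ = (X.1 ^ 1, imp (X.1 ^ 0) X.2) := by
          rw [inf_of_le_right (le_one (imp 1 X.2)), pow_one, pow_zero]
  | succ k ih =>
    calc kpow X (k + 2)
        = kmul X (X.1 ^ (k + 1), imp (X.1 ^ k) X.2) := by rw [kpow, ih]
      _ = (X.1 ^ (k + 2), imp (X.1 ^ (k + 1)) X.2) := by
          simp only [kmul, imp_imp, ← pow_succ', inf_idem]

end CIRL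

theorem stmt16_general {L : Type*} [CIRL L] {m k : ℕ} {X : L × L} (h : X.1 ^ m = X.1 ^ k) :
    kpow X (m + 1) = kpow X (k + 1) := by
  rw [kpow_succ_eq, kpow_succ_eq, pow_succ, pow_succ, h]

/-- If `L` is an `n`-potent CIRL (`n ≥ 1`), then `K(L)` is `(n+1)`-potent. -/
theorem stmt16 {L : Type*} [CIRL L] (n : ℕ) (hn : 1 ≤ n)
    (hpot : ∀ x : L, x ^ n = x ^ (n + 1)) :
    ∀ X : L × L, kpow X (n + 1) = kpow X (n + 2) :=
  fun X => stmt16_general (hpot X.1)
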